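/- Let d be a positive integer, let V, W be subsets of the open unit ball B_d of C^d, and let F be an automorphism of B_d (a holomorphic bijection of B_d onto itself whose inverse is holomorphic) with F(W) = V. Then F maps aff(W) ∩ B_d onto aff(V) ∩ B_d, where aff denotes the affine hull, and the affine hulls aff(V) and aff(W) have the same dimension (and hence the same codimension in C^d). -/

import Mathlib

open Metric

section Helpers

variable {E : Type*} [NormedAddCommGroup E] [InnerProductSpace ℂ E]

/-- Schwarz plus Cartan: an automorphism of the ball fixing the origin is linear. -/
lemma ballAut_linear [StrictConvexSpace ℝ E] (G Ginv : E → E)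
    (hG : DifferentiableOn ℂ G (ball 0 1)) (hGinv : DifferentiableOn ℂ Ginv (ball 0 1))
    (hm : ∀ z ∈ ball (0 : E) 1, G z ∈ ball (0 : E) 1)
    (hm' : ∀ z ∈ ball (0 : E) 1, Ginv z ∈ ball (0 : E) 1)
    (hl : ∀ z ∈ ball (0 : E) 1, Ginv (G z) = z) (h0 : G 0 = 0) :
    ∀ z ∈ ball (0 : E) 1, G z = fderiv ℂ G 0 z := by
  have z0 : (0 : E) ∈ ball (0 : E) 1 := by simp
  have h0' : Ginv 0 = 0 := by simpa [h0] using hl 0 z0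
  have hn : ∀ z ∈ ball (0 : E) 1, ‖G z‖ = ‖z‖ := by
    intro z hz
    have hz1 : ‖z‖ < 1 := by simpa using hz
    have hz2 : ‖G z‖ < 1 := by simpa using hm z hz
    apply le_antisymm
    · exact Complex.norm_le_norm_of_mapsTo_ball hG
        (fun x hx => ball_subset_closedBall (hm x hx)) h0 hz1
    · have := Complex.norm_le_norm_of_mapsTo_ball hGinv
        (fun x hx => ball_subset_closedBall (hm' x hx)) h0' hz2
      rwa [hl z hz] at this
  intro w hw
  have hw1 : ‖w‖ < 1 := by simpa using hw
  by_cases hw0 : w = 0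
  · simp [hw0, h0]
  have hwp : 0 < ‖w‖ := norm_pos_iff.mpr hw0
  set f : ℂ → E := fun l => G (l • w) with hf
  have hmaps : ∀ l ∈ ball (0 : ℂ) (1 / ‖w‖), l • w ∈ ball (0 : E) 1 := by
    intro l hl
    rw [mem_ball_zero_iff] at hl ⊢
    rw [norm_smul]
    exact (lt_div_iff₀ hwp).mp hl
  have hf0 : f 0 = 0 := by simp [hf, h0]
  have hfd : DifferentiableOn ℂ f (ball 0 (1 / ‖w‖)) := by
    apply hG.comp (t := ball 0 1) (f := fun l : ℂ => l • w)
    · fun_prop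
    · exact hmaps
  have h1 : (1 : ℂ) ∈ ball (0 : ℂ) (1 / ‖w‖) := by
    rw [mem_ball_zero_iff, norm_one]
    exact (one_lt_div hwp).mpr hw1
  have hds : dslope f 0 1 = G w := by
    rw [dslope_of_ne _ one_ne_zero, slope_def_module, hf0]
    simp [hf]
  have key := Complex.affine_of_mapsTo_ball_of_norm_dslope_eq_div (f := f) (R₂ := 1) hfd
    (by
      intro l hl
      rw [hf0]
      exact ball_subset_closedBall (hm _ (hmaps l hl))) h1
    (by rw [hds, hn w hw]; simp)
  rw [hds, hf0] at key
  have hd1 : HasDerivAt f (G w) 0 := by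
    have hlin : HasDerivAt (fun z : ℂ => (0 : E) + (z - 0) • G w) (G w) 0 := by
      have := ((hasDerivAt_id (0 : ℂ)).sub_const 0).smul_const (G w)
      simpa using this.const_add (0 : E)
    refine hlin.congr_of_eventuallyEq ?_
    exact key.eventuallyEq_of_mem (ball_mem_nhds _ (by positivity))
  have hd2 : HasDerivAt f (fderiv ℂ G 0 w) 0 := by
    have hGd : HasFDerivAt G (fderiv ℂ G 0) ((0 : ℂ) • w) := by
      rw [zero_smul]
      exact (hG.differentiableAt (ball_mem_nhds _ one_pos)).hasFDerivAt
    have hg : HasDerivAt (fun l : ℂ => l • w) w 0 := by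
      simpa using (hasDerivAt_id (0 : ℂ)).smul_const w
    exact hGd.comp_hasDerivAt (0 : ℂ) hg
  exact hd1.unique hd2

/-- The numerator linear part of the Moebius involution. -/
noncomputable def mobA (b : E) (s : ℝ) (z : E) : E :=
  (s : ℂ) • z + (inner ℂ b z / (1 + s)) • b

/-- The Moebius involution exchanging `0` and `b` (with `s = √(1 - ‖b‖²)`). -/
noncomputable def mob (b : E) (s : ℝ) (z : E) : E :=
  (1 - inner ℂ b z)⁻¹ • (b - mobA b s z)

lemma mob_den_ne (b z : E) (hb : ‖b‖ < 1) (hz : ‖z‖ < 1) : (1 - inner ℂ b z : ℂ) ≠ 0 := by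
  intro h
  have h1 : (inner ℂ b z : ℂ) = 1 := (sub_eq_zero.mp h).symm
  have h2 := norm_inner_le_norm (𝕜 := ℂ) b z
  rw [h1, norm_one] at h2
  nlinarith [norm_nonneg b, norm_nonneg z]

lemma mob_num_norm (b : E) (s : ℝ) (hs : 0 < s) (hsb : s ^ 2 + ‖b‖ ^ 2 = 1) (z : E) :
    ‖b - mobA b s z‖ ^ 2 = ‖(1 - inner ℂ b z : ℂ)‖ ^ 2 - s ^ 2 * (1 - ‖z‖ ^ 2) := by
  have e : b - mobA b s z = (1 - inner ℂ b z / (1 + s) : ℂ) • b - (s : ℂ) • z := by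
    unfold mobA; module
  rw [e, @norm_sub_sq ℂ, norm_smul, norm_smul, mul_pow, mul_pow, inner_smul_left,
    inner_smul_right]
  generalize (inner ℂ b z : ℂ) = t
  have hb2 : ‖b‖ ^ 2 = 1 - s ^ 2 := by linarith
  have e2 : (1 - t / (1 + s) : ℂ) = ((1 - t.re / (1 + s) : ℝ) : ℂ) +
      ((-(t.im / (1 + s)) : ℝ) : ℂ) * Complex.I := by
    have h1s : (1 + (s : ℂ)) ≠ 0 := by exact_mod_cast (by positivity : (1 + s) ≠ 0)
    conv_lhs => rw [← Complex.re_add_im t]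
    push_cast
    ring
  have hre : (1 - t / (1 + s) : ℂ).re = 1 - t.re / (1 + s) := by
    rw [e2]; generalize 1 - t.re / (1 + s) = x; simp only [Complex.add_re, Complex.re_ofReal_mul, Complex.ofReal_re, Complex.I_re]; ring
  have him : (1 - t / (1 + s) : ℂ).im = -(t.im / (1 + s)) := by
    rw [e2]; simp only [Complex.add_im, Complex.im_ofReal_mul, Complex.ofReal_im, Complex.I_im]; ring
  generalize (1 - t / (1 + s) : ℂ) = u at hre him
  rw [hb2, Complex.sq_norm, Complex.sq_norm, Complex.sq_norm]
  simp only [Complex.normSq_apply, RCLike.re_to_complex, Complex.mul_re, Complex.mul_im,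
    Complex.conj_re, Complex.conj_im, Complex.ofReal_re, Complex.ofReal_im, Complex.sub_re,
    Complex.sub_im, Complex.one_re, Complex.one_im, hre, him]
  have : (1 + s) ≠ 0 := by positivity
  field_simp
  ring

lemma mob_mem (b : E) (s : ℝ) (hs : 0 < s) (hsb : s ^ 2 + ‖b‖ ^ 2 = 1) (z : E)
    (hz : z ∈ ball (0 : E) 1) : mob b s z ∈ ball (0 : E) 1 := by
  have hz1 : ‖z‖ < 1 := by simpa using hz
  have hb : ‖b‖ < 1 := by nlinarith [norm_nonneg b, sq_nonneg s, pow_pos hs 2]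
  have hne := norm_pos_iff.mpr (mob_den_ne b z hb hz1)
  rw [mem_ball_zero_iff, mob, norm_smul, norm_inv, inv_mul_lt_iff₀ hne, mul_one]
  apply lt_of_pow_lt_pow_left₀ 2 hne.le
  rw [mob_num_norm b s hs hsb z]
  have : 0 < 1 - ‖z‖ ^ 2 := by nlinarith [norm_nonneg z]
  have := mul_pos (pow_pos hs 2) this
  linarith

lemma mob_inner (b : E) (s : ℝ) (hs : 0 < s) (hsb : s ^ 2 + ‖b‖ ^ 2 = 1) (z : E)
    (hne : (1 - inner ℂ b z : ℂ) ≠ 0) :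
    (1 - inner ℂ b (mob b s z) : ℂ) = s ^ 2 / (1 - inner ℂ b z) := by
  have hbb : (inner ℂ b b : ℂ) = 1 - s ^ 2 := by
    rw [inner_self_eq_norm_sq_to_K]
    have : ((s ^ 2 + ‖b‖ ^ 2 : ℝ) : ℂ) = 1 := by rw [hsb]; simp
    push_cast at this
    simp only [Complex.coe_algebraMap]
    linear_combination this
  have h1s : (1 + (s : ℂ)) ≠ 0 := by exact_mod_cast (by positivity : (1 + s) ≠ 0)
  simp only [mob, mobA, inner_smul_right, inner_sub_right, inner_add_right, hbb]
  field_simp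
  ring

lemma mob_mob (b : E) (s : ℝ) (hs : 0 < s) (hsb : s ^ 2 + ‖b‖ ^ 2 = 1) (z : E)
    (hne : (1 - inner ℂ b z : ℂ) ≠ 0) : mob b s (mob b s z) = z := by
  have h1 := mob_inner b s hs hsb z hne
  have h1s : (1 + (s : ℂ)) ≠ 0 := by exact_mod_cast (by positivity : (1 + s) ≠ 0)
  have hsc : (s : ℂ) ≠ 0 := by exact_mod_cast hs.ne'
  have h2 : (inner ℂ b (mob b s z) : ℂ) = 1 - s ^ 2 / (1 - inner ℂ b z) := by
    linear_combination -h1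
  have e : mob b s (mob b s z) = (1 - inner ℂ b (mob b s z) : ℂ)⁻¹ •
      (b - ((s : ℂ) • mob b s z + (inner ℂ b (mob b s z) / (1 + s) : ℂ) • b)) := rfl
  rw [e, h1, h2]
  unfold mob mobA
  generalize (inner ℂ b z : ℂ) = t at *
  match_scalars <;> field_simp <;> ring

lemma mob_self (b : E) (s : ℝ) (hs : 0 < s) (hsb : s ^ 2 + ‖b‖ ^ 2 = 1) : mob b s b = 0 := by
  have h : mob b s 0 = b := by simp [mob, mobA]
  have := mob_mob b s hs hsb 0 (by simp)
  rwa [h] at this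

lemma mob_diff (b : E) (s : ℝ) (hb : ‖b‖ < 1) : DifferentiableOn ℂ (mob b s) (ball 0 1) := by
  have hi : Differentiable ℂ (fun z : E => (inner ℂ b z : ℂ)) := (innerSL ℂ b).differentiable
  unfold mob mobA
  apply DifferentiableOn.smul
  · apply DifferentiableOn.inv
    · exact ((differentiable_const _).sub hi).differentiableOn
    · intro z hz
      exact mob_den_ne b z hb (by simpa using hz)
  · apply Differentiable.differentiableOn
    apply (differentiable_const _).sub
    apply (differentiable_id.const_smul _).add
    simp only [div_eq_mul_inv]
    exact (hi.mul_const _).smul_const b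

/-- Chords through `w₀` are carried to chords through `F w₀`, linearly up to scalars. -/
lemma ballAut_chord [StrictConvexSpace ℝ E] (F Finv : E → E)
    (hF : DifferentiableOn ℂ F (ball 0 1)) (hFinv : DifferentiableOn ℂ Finv (ball 0 1))
    (hm : ∀ z ∈ ball (0 : E) 1, F z ∈ ball (0 : E) 1)
    (hm' : ∀ z ∈ ball (0 : E) 1, Finv z ∈ ball (0 : E) 1)
    (hl : ∀ z ∈ ball (0 : E) 1, Finv (F z) = z)
    (w₀ : E) (hw₀ : w₀ ∈ ball (0 : E) 1) :
    ∃ N : E →ₗ[ℂ] E, ∀ w ∈ ball (0 : E) 1, ∃ c : ℂ, c ≠ 0 ∧ N (w - w₀) = c • (F w - F w₀) := by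
  have hbm : F 0 ∈ ball (0 : E) 1 := hm 0 (by simp)
  set b := F 0 with hbdef
  have hb : ‖b‖ < 1 := by simpa using hbm
  have hpos : 0 < 1 - ‖b‖ ^ 2 := by nlinarith [norm_nonneg b]
  set s := √(1 - ‖b‖ ^ 2) with hsdef
  have hs : 0 < s := Real.sqrt_pos.mpr hpos
  have hsb : s ^ 2 + ‖b‖ ^ 2 = 1 := by rw [hsdef, Real.sq_sqrt hpos.le]; ring
  have hmm : ∀ z ∈ ball (0 : E) 1, mob b s (mob b s z) = z := fun z hz =>
    mob_mob b s hs hsb z (mob_den_ne b z hb (by simpa using hz))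
  have hlin := ballAut_linear (mob b s ∘ F) (Finv ∘ mob b s)
    ((mob_diff b s hb).comp hF hm)
    (hFinv.comp (mob_diff b s hb) (fun z hz => mob_mem b s hs hsb z hz))
    (fun z hz => mob_mem b s hs hsb _ (hm z hz))
    (fun z hz => hm' _ (mob_mem b s hs hsb _ hz))
    (fun z hz => by simp [hmm _ (hm z hz), hl z hz])
    (by simp [← hbdef, mob_self b s hs hsb])
  set L := fderiv ℂ (mob b s ∘ F) 0 with hL
  have hLm : ∀ z ∈ ball (0 : E) 1, (1 - inner ℂ b (L z) : ℂ) ≠ 0 := by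
    intro z hz
    rw [← hlin z hz]
    exact mob_den_ne b _ hb (by simpa using mob_mem b s hs hsb _ (hm z hz))
  have hFL : ∀ z ∈ ball (0 : E) 1,
      (1 - inner ℂ b (L z) : ℂ) • F z = b - mobA b s (L z) := by
    intro z hz
    have h1 : F z = mob b s (L z) := by
      rw [← hlin z hz]; exact (hmm _ (hm z hz)).symm
    rw [h1, mob, smul_smul, mul_inv_cancel₀ (hLm z hz), one_smul]
  let ℓ : E →ₗ[ℂ] ℂ := (innerSL ℂ b : E →L[ℂ] ℂ).toLinearMap ∘ₗ L.toLinearMap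
  refine ⟨-((s : ℂ) • L.toLinearMap + ((1 + s : ℂ)⁻¹ • ℓ).smulRight b) + ℓ.smulRight (F w₀), ?_⟩
  intro w hw
  refine ⟨1 - inner ℂ b (L w), hLm w hw, ?_⟩
  have e1 := hFL w hw
  have e2 := hFL w₀ hw₀
  have e3 : (1 - inner ℂ b (L w) : ℂ) • (F w - F w₀) =
      (b - mobA b s (L w)) - (b - mobA b s (L w₀)) +
        ((inner ℂ b (L w) - inner ℂ b (L w₀) : ℂ)) • F w₀ := by
    rw [← e1, ← e2]; module
  rw [e3]
  simp only [mobA, ℓ, LinearMap.add_apply, LinearMap.neg_apply, LinearMap.smul_apply,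
    LinearMap.smulRight_apply, LinearMap.comp_apply, ContinuousLinearMap.coe_coe, innerSL_apply_apply,
    map_sub, inner_sub_right, smul_eq_mul, div_eq_mul_inv]
  module

/-- One inclusion and one dimension inequality. -/
lemma ballAut_half [FiniteDimensional ℂ E] [StrictConvexSpace ℝ E] (F Finv : E → E)
    (hF : DifferentiableOn ℂ F (ball 0 1)) (hFinv : DifferentiableOn ℂ Finv (ball 0 1))
    (hm : ∀ z ∈ ball (0 : E) 1, F z ∈ ball (0 : E) 1)
    (hm' : ∀ z ∈ ball (0 : E) 1, Finv z ∈ ball (0 : E) 1)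
    (hl : ∀ z ∈ ball (0 : E) 1, Finv (F z) = z)
    (W : Set E) (hW : W ⊆ ball (0 : E) 1) :
    (∀ z ∈ affineSpan ℂ W, z ∈ ball (0 : E) 1 → F z ∈ affineSpan ℂ (F '' W)) ∧
    Module.finrank ℂ (affineSpan ℂ (F '' W)).direction ≤
      Module.finrank ℂ (affineSpan ℂ W).direction := by
  rcases W.eq_empty_or_nonempty with rfl | ⟨w₀, hw₀⟩
  · rw [Set.image_empty]
    refine ⟨fun z hz => ?_, le_rfl⟩
    simp at hz
    exact hz.elim
  obtain ⟨N, hN⟩ := ballAut_chord F Finv hF hFinv hm hm' hl w₀ (hW hw₀)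
  have hmap : (affineSpan ℂ W).direction.map N = (affineSpan ℂ (F '' W)).direction := by
    rw [direction_affineSpan, direction_affineSpan,
      vectorSpan_eq_span_vsub_set_right ℂ hw₀,
      vectorSpan_eq_span_vsub_set_right ℂ (Set.mem_image_of_mem F hw₀), Submodule.map_span]
    apply le_antisymm
    · rw [Submodule.span_le]
      rintro _ ⟨_, ⟨w, hw, rfl⟩, rfl⟩
      obtain ⟨c, -, hc⟩ := hN w (hW hw)
      simp only [vsub_eq_sub, hc]
      exact Submodule.smul_mem _ _ (Submodule.subset_span ⟨F w, ⟨w, hw, rfl⟩, rfl⟩)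
    · rw [Submodule.span_le]
      rintro _ ⟨_, ⟨w, hw, rfl⟩, rfl⟩
      obtain ⟨c, hc0, hc⟩ := hN w (hW hw)
      have : F w -ᵥ F w₀ = c⁻¹ • N (w - w₀) := by
        rw [hc, smul_smul, inv_mul_cancel₀ hc0, one_smul, vsub_eq_sub]
      simp only [this]
      exact Submodule.smul_mem _ _ (Submodule.subset_span ⟨w - w₀, ⟨w, hw, rfl⟩, rfl⟩)
  constructor
  · intro z hz hzb
    obtain ⟨c, hc0, hc⟩ := hN z hzb
    have h1 : F z - F w₀ = c⁻¹ • N (z - w₀) := by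
      rw [hc, smul_smul, inv_mul_cancel₀ hc0, one_smul]
    have h2 : F z - F w₀ ∈ (affineSpan ℂ (F '' W)).direction := by
      rw [h1, ← hmap]
      exact Submodule.smul_mem _ _ (Submodule.mem_map_of_mem
        (AffineSubspace.vsub_mem_direction hz (mem_affineSpan ℂ hw₀)))
    have := AffineSubspace.vadd_mem_of_mem_direction h2
      (mem_affineSpan ℂ (Set.mem_image_of_mem F hw₀))
    simpa using this
  · rw [← hmap]
    exact Submodule.finrank_map_le _ _

end Helpers

/-- An automorphism of the open unit ball of `ℂ^d` maps intersections of affine hulls with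
the ball onto each other, and preserves the dimension (hence the codimension) of affine
hulls. -/
theorem ballAutomorphism_affineSpan (d : ℕ) (hd : 0 < d)
    (V W : Set (EuclideanSpace ℂ (Fin d)))
    (hV : V ⊆ ball (0 : EuclideanSpace ℂ (Fin d)) 1)
    (hW : W ⊆ ball (0 : EuclideanSpace ℂ (Fin d)) 1)
    (F Finv : EuclideanSpace ℂ (Fin d) → EuclideanSpace ℂ (Fin d))
    (hF : DifferentiableOn ℂ F (ball 0 1)) (hFinv : DifferentiableOn ℂ Finv (ball 0 1))
    (hFball : F '' ball 0 1 = ball 0 1)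
    (hFinvF : ∀ z ∈ ball (0 : EuclideanSpace ℂ (Fin d)) 1, Finv (F z) = z)
    (hFFinv : ∀ z ∈ ball (0 : EuclideanSpace ℂ (Fin d)) 1, F (Finv z) = z)
    (hFW : F '' W = V) :
    F '' ((affineSpan ℂ W : Set (EuclideanSpace ℂ (Fin d))) ∩ ball 0 1) =
      (affineSpan ℂ V : Set (EuclideanSpace ℂ (Fin d))) ∩ ball 0 1 ∧
    Module.finrank ℂ (affineSpan ℂ V).direction =
      Module.finrank ℂ (affineSpan ℂ W).direction ∧
    d - Module.finrank ℂ (affineSpan ℂ V).direction =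
      d - Module.finrank ℂ (affineSpan ℂ W).direction := by
  have hm : ∀ z ∈ ball (0 : EuclideanSpace ℂ (Fin d)) 1, F z ∈ ball (0 : EuclideanSpace ℂ (Fin d)) 1 :=
    fun z hz => hFball ▸ Set.mem_image_of_mem F hz
  have hm' : ∀ z ∈ ball (0 : EuclideanSpace ℂ (Fin d)) 1,
      Finv z ∈ ball (0 : EuclideanSpace ℂ (Fin d)) 1 := by
    intro z hz
    rw [← hFball] at hz
    obtain ⟨y, hy, rfl⟩ := hz
    rwa [hFinvF y hy]
  have hVW : Finv '' V = W := by
    rw [← hFW, Set.image_image]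
    exact (Set.image_congr fun w hw => hFinvF w (hW hw)).trans (Set.image_id' W)
  haveI : StrictConvexSpace ℝ (EuclideanSpace ℂ (Fin d)) := by
    letI := InnerProductSpace.rclikeToReal ℂ (EuclideanSpace ℂ (Fin d))
    infer_instance
  obtain ⟨a1, a2⟩ := ballAut_half F Finv hF hFinv hm hm' hFinvF W hW
  obtain ⟨b1, b2⟩ := ballAut_half Finv F hFinv hF hm' hm hFFinv V hV
  rw [hFW] at a1 a2
  rw [hVW] at b1 b2
  have hdim := le_antisymm a2 b2
  refine ⟨?_, hdim, by rw [hdim]⟩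
  ext v
  constructor
  · rintro ⟨z, ⟨hz, hzb⟩, rfl⟩
    exact ⟨a1 z hz hzb, hm z hzb⟩
  · rintro ⟨hv, hvb⟩
    exact ⟨Finv v, ⟨b1 v hv hvb, hm' v hvb⟩, hFFinv v hvb⟩
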